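/- (Positivity of the limiting diffusivity sum, d ≥ 3.) Let d ≥ 3 and fix k ∈ ℤ^d∖{0}. For N ∈ ℕ set ε_N := 1/(N + 1/2). Then the limit lim_{N→∞} ε_N^{d−2} Σ_{ℓ,m ∈ ℤ^d∖{0}, ℓ+m=k, ε_N |ℓ|_∞ ≤ 1, ε_N |m|_∞ ≤ 1} 1/(|ℓ|² + |m|²) exists, equals (1/2) ∫_{[−1,1]^d} |x|^{−2} dx, and in particular is strictly positive and independent of k. -/

import Mathlib

open scoped Classical
open MeasureTheory

noncomputable section

namespace SBE

/-- Squared Euclidean norm of a point of `ℤ^d`. -/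
def nsq {d : ℕ} (k : Fin d → ℤ) : ℝ := ∑ i, ((k i : ℝ))^2

/-- Supremum norm of a point of `ℤ^d`. -/
def sN {d : ℕ} (k : Fin d → ℤ) : ℝ := ((Finset.univ.sup fun i => (k i).natAbs : ℕ) : ℝ)

/-!
After rescaling by the cutoff radius `R`, the sum is `R⁻ᵈ` times the sum over `u ∈ R⁻¹ ℤᵈ` of
`K (u, R⁻¹ k - u)`, where `K (u, v) = (|u|² + |v|²)⁻¹` on pairs of nonzero points of the unit cube.
It is therefore exactly the integral of the step function obtained by rounding `x` down to
`u ∈ R⁻¹ ℤᵈ`. As `R → ∞` the pair `(u, R⁻¹ k - u)` tends to `(x, -x)`, at which `K` is continuous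
for almost every `x`, so the step functions converge to `(1/2) |x|⁻²` on the cube. The singularity
at the origin is harmless: a nonzero point `u` of `R⁻¹ ℤᵈ` has sup norm at least the mesh `R⁻¹`,
whence `‖x‖ ≤ 2 ‖u‖`, and the step functions are dominated by `4 ‖x‖⁻²`, which is integrable near
the origin since `d ≥ 3`.
-/

section Development

open Filter Topology Metric

variable {ι E : Type*}

/-- The coordinatewise floor: the corner in `ℤ^ι` of the half-open unit cell containing `x`. -/
def floorVec (x : ι → ℝ) : ι → ℤ := fun i => ⌊x i⌋

/-- The point `R⁻¹ l` of the lattice `R⁻¹ ℤ^ι` of mesh `R⁻¹`. -/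
def latticePoint (R : ℝ) (l : ι → ℤ) : ι → ℝ := R⁻¹ • fun i => (l i : ℝ)

/-- The rounding of `x` down, coordinatewise, to the lattice `R⁻¹ ℤ^ι`. -/
def latticeFloor (R : ℝ) (x : ι → ℝ) : ι → ℝ := latticePoint R (floorVec (R • x))

lemma measurable_floorVec : Measurable (floorVec : (ι → ℝ) → ι → ℤ) :=
  measurable_pi_lambda _ fun i => Int.measurable_floor.comp (measurable_pi_apply i)

lemma floorVec_preimage_singleton (l : ι → ℤ) :
    floorVec ⁻¹' {l} = Set.univ.pi fun i => Set.Ico (l i : ℝ) (l i + 1) := by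
  ext x
  simp [floorVec, funext_iff, Int.floor_eq_iff]

lemma latticePoint_sub (R : ℝ) (k l : ι → ℤ) :
    latticePoint R (k - l) = latticePoint R k - latticePoint R l := by
  ext i
  simp [latticePoint, mul_sub]

lemma latticePoint_eq_zero_iff {R : ℝ} (hR : R ≠ 0) {l : ι → ℤ} : latticePoint R l = 0 ↔ l = 0 := by
  simp [latticePoint, funext_iff, hR]

lemma latticeFloor_zero (R : ℝ) : latticeFloor R (0 : ι → ℝ) = 0 := by
  ext i
  simp [latticeFloor, latticePoint, floorVec]

lemma abs_latticeFloor_apply_sub_le {R : ℝ} (hR : 0 < R) (x : ι → ℝ) (i : ι) :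
    |latticeFloor R x i - x i| ≤ R⁻¹ := by
  have sub_eq_fract : latticeFloor R x i - x i = -(R⁻¹ * Int.fract (R * x i)) := by
    simp only [latticeFloor, latticePoint, floorVec, Int.fract, Pi.smul_apply, smul_eq_mul]
    field_simp
    ring
  rw [sub_eq_fract, abs_neg, abs_of_nonneg (by positivity)]
  exact mul_le_of_le_one_right (by positivity) (Int.fract_lt_one _).le

lemma tendsto_latticePoint_zero (k : ι → ℤ) :
    Tendsto (fun R => latticePoint R k) atTop (𝓝 0) := by
  simpa only [latticePoint, zero_smul] using
    (tendsto_inv_atTop_zero (𝕜 := ℝ)).smul (tendsto_const_nhds (x := fun i => (k i : ℝ)))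

lemma tendsto_latticeFloor (x : ι → ℝ) : Tendsto (fun R => latticeFloor R x) atTop (𝓝 x) := by
  refine tendsto_pi_nhds.2 fun i => ?_
  rw [tendsto_iff_dist_tendsto_zero]
  refine squeeze_zero' (.of_forall fun R => dist_nonneg) ?_ tendsto_inv_atTop_zero
  filter_upwards [eventually_gt_atTop 0] with R hR using abs_latticeFloor_apply_sub_le hR x i

variable [Fintype ι]

lemma map_floorVec_volume : Measure.map floorVec (volume : Measure (ι → ℝ)) = Measure.count := by
  refine Measure.ext_of_singleton fun l => ?_
  rw [Measure.map_apply measurable_floorVec (measurableSet_singleton l), Measure.count_singleton,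
    floorVec_preimage_singleton, Real.volume_pi_Ico]
  simp

lemma norm_latticePoint (R : ℝ) (l : ι → ℤ) : ‖latticePoint R l‖ = |R|⁻¹ * ‖l‖ := by
  have norm_cast_eq : ‖fun i => (l i : ℝ)‖ = ‖l‖ := by
    simp only [Pi.norm_def, nnnorm, Int.norm_cast_real]
  rw [latticePoint, norm_smul, norm_cast_eq, norm_inv, Real.norm_eq_abs]

lemma sum_latticePoint_sq (R : ℝ) (l : ι → ℤ) :
    ∑ i, latticePoint R l i ^ 2 = (R ^ 2)⁻¹ * ∑ i, (l i : ℝ) ^ 2 := by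
  simp [latticePoint, mul_pow, Finset.mul_sum]

lemma one_le_norm_of_ne_zero {l : ι → ℤ} (hl : l ≠ 0) : 1 ≤ ‖l‖ := by
  obtain ⟨i, hi⟩ := Function.ne_iff.1 hl
  calc (1 : ℝ) ≤ ‖l i‖ := by
        rw [Int.norm_eq_abs]
        exact_mod_cast Int.one_le_abs hi
    _ ≤ ‖l‖ := norm_le_pi_norm l i

lemma norm_latticeFloor_sub_le {R : ℝ} (hR : 0 < R) (x : ι → ℝ) : ‖latticeFloor R x - x‖ ≤ R⁻¹ :=
  (pi_norm_le_iff_of_nonneg (by positivity)).2 (abs_latticeFloor_apply_sub_le hR x)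

lemma norm_le_two_mul_norm_latticeFloor {R : ℝ} (hR : 0 < R) {x : ι → ℝ}
    (hx : latticeFloor R x ≠ 0) : ‖x‖ ≤ 2 * ‖latticeFloor R x‖ := by
  have mesh_le : R⁻¹ ≤ ‖latticeFloor R x‖ := by
    rw [latticeFloor, norm_latticePoint, abs_of_pos hR]
    exact le_mul_of_one_le_right (by positivity)
      (one_le_norm_of_ne_zero fun h => hx ((latticePoint_eq_zero_iff hR.ne').2 h))
  calc ‖x‖ ≤ ‖latticeFloor R x‖ + ‖latticeFloor R x - x‖ := norm_le_norm_add_norm_sub _ _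
    _ ≤ 2 * ‖latticeFloor R x‖ := by linarith [norm_latticeFloor_sub_le hR x]

section RiemannSum

variable [NormedAddCommGroup E] [NormedSpace ℝ E] [FiniteDimensional ℝ E]

-- Where `g` is not summable, both sides take the junk value `0`.
lemma integral_comp_floorVec (g : (ι → ℤ) → E) : ∫ x, g (floorVec x) = ∑' l, g l := by
  have := FiniteDimensional.complete ℝ E
  rw [← integral_map measurable_floorVec.aemeasurable
    StronglyMeasurable.of_discrete.aestronglyMeasurable, map_floorVec_volume]
  by_cases hg : Integrable g Measure.count
  · simp [integral_countable hg, measureReal_def]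
  · have not_summable : ¬Summable g := by rwa [← summable_norm_iff, ← integrable_count_iff]
    rw [integral_undef hg, tsum_eq_zero_of_not_summable not_summable]

lemma integral_comp_floorVec_smul {R : ℝ} (hR : 0 ≤ R) (g : (ι → ℤ) → E) :
    ∫ x, g (floorVec (R • x)) = (R ^ Fintype.card ι)⁻¹ • ∑' l, g l := by
  rw [Measure.integral_comp_smul_of_nonneg volume (fun x => g (floorVec x)) R (hR := hR),
    integral_comp_floorVec, Module.finrank_fintype_fun_eq_card]

theorem tendsto_smul_tsum_of_dominated {G : ℝ → (ι → ℤ) → E} {f : (ι → ℝ) → E}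
    (bound : (ι → ℝ) → ℝ)
    (h_bound : ∀ᶠ R in atTop, ∀ᵐ x, ‖G R (floorVec (R • x))‖ ≤ bound x)
    (bound_integrable : Integrable bound)
    (h_lim : ∀ᵐ x, Tendsto (fun R => G R (floorVec (R • x))) atTop (𝓝 (f x))) :
    Tendsto (fun R : ℝ => (R ^ Fintype.card ι)⁻¹ • ∑' l, G R l) atTop (𝓝 (∫ x, f x)) := by
  have integral_tendsto :
      Tendsto (fun R : ℝ => ∫ x, G R (floorVec (R • x))) atTop (𝓝 (∫ x, f x)) := by
    refine tendsto_integral_filter_of_dominated_convergence bound (.of_forall fun R => ?_)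
      h_bound bound_integrable h_lim
    exact (StronglyMeasurable.of_discrete.comp_measurable
      (measurable_floorVec.comp (measurable_const_smul R))).aestronglyMeasurable
  refine integral_tendsto.congr' ?_
  filter_upwards [eventually_ge_atTop 0] with R hR using integral_comp_floorVec_smul hR (G R)

end RiemannSum

lemma integrableOn_inv_norm_pow_closedBall [NormedAddCommGroup E] [NormedSpace ℝ E]
    [FiniteDimensional ℝ E] [MeasurableSpace E] [BorelSpace E] (μ : Measure E)
    [μ.IsAddHaarMeasure] {p : ℕ} (hp : p < Module.finrank ℝ E) (r : ℝ) :
    IntegrableOn (fun x : E => (‖x‖ ^ p)⁻¹) (closedBall 0 r) μ := by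
  have : Nontrivial E := Module.nontrivial_of_finrank_pos (R := ℝ) (by omega)
  refine IntegrableOn.mono_set ?_ (closedBall_subset_ball (lt_add_one r))
  rw [integrableOn_fun_norm_addHaar μ (f := fun y => (y ^ p)⁻¹)]
  have radial_integrable : IntegrableOn (fun y : ℝ => y ^ (Module.finrank ℝ E - 1 - p))
      (Set.Ioo 0 (r + 1)) :=
    ((continuous_pow _).integrableOn_Icc (a := 0) (b := r + 1)).mono_set Set.Ioo_subset_Icc_self
  refine radial_integrable.congr_fun (fun y hy => ?_) measurableSet_Ioo
  rw [smul_eq_mul, ← div_eq_mul_inv]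
  exact pow_sub₀ y hy.1.ne' (by omega)

lemma norm_sq_le_sum_sq (x : ι → ℝ) : ‖x‖ ^ 2 ≤ ∑ i, x i ^ 2 := by
  refine (Real.le_sqrt (norm_nonneg x) (by positivity)).1 ?_
  refine (pi_norm_le_iff_of_nonneg (Real.sqrt_nonneg _)).2 fun i => Real.abs_le_sqrt ?_
  exact Finset.single_le_sum (f := fun i => x i ^ 2) (fun i _ => sq_nonneg (x i))
    (Finset.mem_univ i)

lemma sum_sq_pos {x : ι → ℝ} (hx : x ≠ 0) : 0 < ∑ i, x i ^ 2 :=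
  (pow_pos (norm_pos_iff.2 hx) 2).trans_le (norm_sq_le_sum_sq x)

lemma inv_sum_sq_nonneg (x : ι → ℝ) : 0 ≤ (∑ i, x i ^ 2)⁻¹ := by positivity

lemma inv_sum_sq_le_inv_norm_sq (x : ι → ℝ) : (∑ i, x i ^ 2)⁻¹ ≤ (‖x‖ ^ 2)⁻¹ := by
  rcases eq_or_ne x 0 with rfl | hx
  · simp
  · exact inv_anti₀ (pow_pos (norm_pos_iff.2 hx) 2) (norm_sq_le_sum_sq x)

lemma integrableOn_inv_sum_sq_closedBall (hι : 2 < Fintype.card ι) (r : ℝ) :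
    IntegrableOn (fun x : ι → ℝ => (∑ i, x i ^ 2)⁻¹) (closedBall 0 r) := by
  refine (integrableOn_inv_norm_pow_closedBall volume (by simpa using hι) r).mono'
    (by fun_prop : Measurable _).aestronglyMeasurable (.of_forall fun x => ?_)
  rw [Real.norm_of_nonneg (inv_sum_sq_nonneg x)]
  exact inv_sum_sq_le_inv_norm_sq x

lemma setIntegral_inv_sum_sq_closedBall_pos (hι : 2 < Fintype.card ι) {r : ℝ} (hr : 0 < r) :
    0 < ∫ x in closedBall (0 : ι → ℝ) r, (∑ i, x i ^ 2)⁻¹ := by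
  have : Nonempty ι := Fintype.card_pos_iff.1 (by omega)
  rw [setIntegral_pos_iff_support_of_nonneg_ae (.of_forall inv_sum_sq_nonneg)
    (integrableOn_inv_sum_sq_closedBall hι r)]
  have punctured_subset : closedBall (0 : ι → ℝ) r \ {0} ⊆
      (Function.support fun x => (∑ i, x i ^ 2)⁻¹) ∩ closedBall 0 r :=
    fun x hx => ⟨(inv_pos.2 (sum_sq_pos hx.2)).ne', hx.1⟩
  calc 0 < volume (closedBall (0 : ι → ℝ) r) := measure_closedBall_pos _ _ hr
    _ = volume (closedBall (0 : ι → ℝ) r \ {0}) := (measure_sdiff_null (measure_singleton 0)).symm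
    _ ≤ _ := measure_mono punctured_subset

lemma univ_pi_Icc_eq_closedBall {r : ℝ} (hr : 0 ≤ r) :
    (Set.univ.pi fun _ : ι => Set.Icc (-r) r) = closedBall 0 r := by
  simp [closedBall_pi _ hr, Real.closedBall_eq_Icc]

/-- The summand of the diffusivity sum as a function of a pair of points of `ℝ^ι`, for the cutoff
radius `1`. -/
def cutoffKernel (p : (ι → ℝ) × (ι → ℝ)) : ℝ :=
  if p.1 ≠ 0 ∧ p.2 ≠ 0 ∧ ‖p.1‖ ≤ 1 ∧ ‖p.2‖ ≤ 1 then (∑ i, p.1 i ^ 2 + ∑ i, p.2 i ^ 2)⁻¹ else 0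

lemma cutoffKernel_nonneg (p : (ι → ℝ) × (ι → ℝ)) : 0 ≤ cutoffKernel p := by
  unfold cutoffKernel
  positivity

lemma cutoffKernel_le_inv_norm_sq (p : (ι → ℝ) × (ι → ℝ)) : cutoffKernel p ≤ (‖p.1‖ ^ 2)⁻¹ := by
  unfold cutoffKernel
  split_ifs with h
  · calc (∑ i, p.1 i ^ 2 + ∑ i, p.2 i ^ 2)⁻¹ ≤ (∑ i, p.1 i ^ 2)⁻¹ :=
          inv_anti₀ (sum_sq_pos h.1) (le_add_of_nonneg_right (by positivity))
      _ ≤ (‖p.1‖ ^ 2)⁻¹ := inv_sum_sq_le_inv_norm_sq p.1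
  · positivity

lemma cutoffKernel_self_neg (x : ι → ℝ) :
    cutoffKernel (x, -x) = (closedBall 0 1).indicator (fun x => 1 / 2 * (∑ i, x i ^ 2)⁻¹) x := by
  rcases eq_or_ne x 0 with rfl | hx
  · simp [cutoffKernel]
  · simp only [cutoffKernel, ne_eq, neg_eq_zero, hx, not_false_eq_true, true_and, norm_neg,
      and_self, Pi.neg_apply, neg_sq, ← two_mul, mul_inv, one_div, Set.indicator_apply,
      mem_closedBall_zero_iff]

lemma continuousAt_cutoffKernel {u v : ι → ℝ} (hu₀ : u ≠ 0) (hv₀ : v ≠ 0) (hu₁ : ‖u‖ ≠ 1)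
    (hv₁ : ‖v‖ ≠ 1) : ContinuousAt cutoffKernel (u, v) := by
  have norm_fst : ContinuousAt (fun p : (ι → ℝ) × (ι → ℝ) => ‖p.1‖) (u, v) := by fun_prop
  have norm_snd : ContinuousAt (fun p : (ι → ℝ) × (ι → ℝ) => ‖p.2‖) (u, v) := by fun_prop
  rcases hu₁.lt_or_gt with hu_in | hu_out
  · rcases hv₁.lt_or_gt with hv_in | hv_out
    · have inv_continuousAt : ContinuousAt
          (fun p : (ι → ℝ) × (ι → ℝ) => (∑ i, p.1 i ^ 2 + ∑ i, p.2 i ^ 2)⁻¹) (u, v) :=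
        ContinuousAt.inv₀ (by fun_prop) (add_pos (sum_sq_pos hu₀) (sum_sq_pos hv₀)).ne'
      refine inv_continuousAt.congr ?_
      filter_upwards [continuousAt_fst.eventually_ne hu₀, continuousAt_snd.eventually_ne hv₀,
        norm_fst.eventually_lt_const hu_in, norm_snd.eventually_lt_const hv_in]
        with p hp₁ hp₂ hn₁ hn₂
      exact (if_pos ⟨hp₁, hp₂, hn₁.le, hn₂.le⟩).symm
    · refine continuousAt_const.congr (?_ : (fun _ => (0 : ℝ)) =ᶠ[_] _)
      filter_upwards [norm_snd.eventually_const_lt hv_out] with p hp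
      exact (if_neg fun h => hp.not_ge h.2.2.2).symm
  · refine continuousAt_const.congr (?_ : (fun _ => (0 : ℝ)) =ᶠ[_] _)
    filter_upwards [norm_fst.eventually_const_lt hu_out] with p hp
    exact (if_neg fun h => hp.not_ge h.2.2.1).symm

lemma cutoffKernel_latticeFloor_le {R : ℝ} (hR : 0 < R) (x v : ι → ℝ) :
    cutoffKernel (latticeFloor R x, v) ≤
      (closedBall 0 2).indicator (fun x => 4 * (‖x‖ ^ 2)⁻¹) x := by
  by_cases h : latticeFloor R x ≠ 0 ∧ v ≠ 0 ∧ ‖latticeFloor R x‖ ≤ 1 ∧ ‖v‖ ≤ 1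
  · obtain ⟨floor_ne_zero, -, norm_floor_le, -⟩ := h
    have norm_le := norm_le_two_mul_norm_latticeFloor hR floor_ne_zero
    have norm_pos : 0 < ‖x‖ := norm_pos_iff.2 fun hx =>
      floor_ne_zero (by rw [hx, latticeFloor_zero])
    rw [Set.indicator_of_mem (mem_closedBall_zero_iff.2 (by linarith))]
    calc cutoffKernel (latticeFloor R x, v) ≤ (‖latticeFloor R x‖ ^ 2)⁻¹ :=
          cutoffKernel_le_inv_norm_sq _
      _ = 4 * ((2 * ‖latticeFloor R x‖) ^ 2)⁻¹ := by ring
      _ ≤ 4 * (‖x‖ ^ 2)⁻¹ := by gcongr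
  · rw [cutoffKernel, if_neg h]
    exact Set.indicator_nonneg (fun x _ => by positivity) x

lemma tendsto_cutoffKernel_latticeFloor (k : ι → ℤ) {x : ι → ℝ} (hx₀ : x ≠ 0) (hx₁ : ‖x‖ ≠ 1) :
    Tendsto (fun R => cutoffKernel (latticeFloor R x, latticePoint R k - latticeFloor R x)) atTop
      (𝓝 (cutoffKernel (x, -x))) := by
  have pair_tendsto : Tendsto (fun R => (latticeFloor R x, latticePoint R k - latticeFloor R x))
      atTop (𝓝 (x, -x)) := by
    simpa using (tendsto_latticeFloor x).prodMk_nhds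
      ((tendsto_latticePoint_zero k).sub (tendsto_latticeFloor x))
  exact (continuousAt_cutoffKernel hx₀ (neg_ne_zero.2 hx₀) hx₁ (by rwa [norm_neg])).tendsto.comp
    pair_tendsto

theorem tendsto_tsum_cutoffKernel (hι : 2 < Fintype.card ι) (k : ι → ℤ) :
    Tendsto (fun R : ℝ => (R ^ Fintype.card ι)⁻¹ *
        ∑' l, cutoffKernel (latticePoint R l, latticePoint R (k - l)))
      atTop (𝓝 (1 / 2 * ∫ x in closedBall (0 : ι → ℝ) 1, (∑ i, x i ^ 2)⁻¹)) := by
  have : Nonempty ι := Fintype.card_pos_iff.1 (by omega)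
  rw [← integral_const_mul, ← integral_indicator measurableSet_closedBall]
  refine tendsto_smul_tsum_of_dominated
    ((closedBall 0 2).indicator fun x => 4 * (‖x‖ ^ 2)⁻¹) ?_ ?_ ?_
  · filter_upwards [eventually_gt_atTop 0] with R hR
    refine .of_forall fun x => ?_
    rw [Real.norm_of_nonneg (cutoffKernel_nonneg _)]
    exact cutoffKernel_latticeFloor_le hR x _
  · rw [integrable_indicator_iff measurableSet_closedBall]
    exact (integrableOn_inv_norm_pow_closedBall volume (by simpa using hι) 2).const_mul 4
  · have ae_notMem_sphere : ∀ᵐ x : ι → ℝ, x ∉ sphere 0 1 :=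
      measure_eq_zero_iff_ae_notMem.1 (Measure.addHaar_sphere _ _ _)
    filter_upwards [Measure.ae_ne volume 0, ae_notMem_sphere] with x hx₀ hx
    have hx₁ : ‖x‖ ≠ 1 := by simpa using hx
    simp only [latticePoint_sub]
    rw [← cutoffKernel_self_neg]
    exact tendsto_cutoffKernel_latticeFloor k hx₀ hx₁

variable {d : ℕ}

lemma sN_eq_norm (l : Fin d → ℤ) : sN l = ‖l‖ := by
  rw [sN, Pi.norm_def, ← NNReal.coe_natCast, Nat.cast_finsetSup]
  simp only [NNReal.natCast_natAbs]

lemma cutoffKernel_latticePoint {R : ℝ} (hR : 0 < R) (l m : Fin d → ℤ) :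
    cutoffKernel (latticePoint R l, latticePoint R m) =
      R ^ 2 * if l ≠ 0 ∧ m ≠ 0 ∧ R⁻¹ * sN l ≤ 1 ∧ R⁻¹ * sN m ≤ 1
        then (nsq l + nsq m)⁻¹ else 0 := by
  simp only [cutoffKernel, ne_eq, latticePoint_eq_zero_iff hR.ne', norm_latticePoint,
    abs_of_pos hR, sum_latticePoint_sq, sN_eq_norm, nsq, ← mul_add, mul_inv, inv_inv, mul_ite,
    mul_zero]

end Development

theorem stmt15_general (d : ℕ) (hd : 3 ≤ d) (k : Fin d → ℤ) :
    Filter.Tendsto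
      (fun R : ℝ => R⁻¹ ^ (d - 2) *
        ∑' l : Fin d → ℤ,
          if l ≠ 0 ∧ k - l ≠ 0 ∧ R⁻¹ * sN l ≤ 1 ∧ R⁻¹ * sN (k - l) ≤ 1
          then (nsq l + nsq (k - l))⁻¹ else 0)
      Filter.atTop
      (nhds ((1/2) *
        ∫ x in (Set.univ.pi fun _ : Fin d => Set.Icc (-1:ℝ) 1), (∑ i, (x i)^2)⁻¹)) ∧
    0 < (1/2) *
        ∫ x in (Set.univ.pi fun _ : Fin d => Set.Icc (-1:ℝ) 1), (∑ i, (x i)^2)⁻¹ := by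
  have hι : 2 < Fintype.card (Fin d) := by rwa [Fintype.card_fin]
  rw [univ_pi_Icc_eq_closedBall zero_le_one]
  refine ⟨(tendsto_tsum_cutoffKernel hι k).congr' ?_,
    mul_pos one_half_pos (setIntegral_inv_sum_sq_closedBall_pos hι one_pos)⟩
  filter_upwards [Filter.eventually_gt_atTop 0] with R hR
  have pow_eq : (R ^ d)⁻¹ * R ^ 2 = R⁻¹ ^ (d - 2) := by
    rw [inv_pow, pow_sub₀ R hR.ne' (by omega), mul_inv, inv_inv]
  simp only [cutoffKernel_latticePoint hR, tsum_mul_left, Fintype.card_fin]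
  rw [← mul_assoc, pow_eq]

/-- positivity of the limiting diffusivity sum, `d ≥ 3`.
With `ε_N = (N + 1/2)⁻¹`, the quantity
`ε_N^{d−2} Σ_{ℓ+m=k, ℓ,m≠0, ε_N|ℓ|_∞ ≤ 1, ε_N|m|_∞ ≤ 1} (|ℓ|²+|m|²)⁻¹`
converges, as `N → ∞`, to `(1/2) ∫_{[−1,1]^d} |x|⁻² dx`, which is strictly positive and
independent of `k`. -/
theorem stmt15 (d : ℕ) (hd : 3 ≤ d) (k : Fin d → ℤ) (hk : k ≠ 0) :
    Filter.Tendsto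
      (fun N : ℕ => (((N:ℝ) + 1/2)⁻¹) ^ (d - 2) *
        ∑' l : Fin d → ℤ,
          if l ≠ 0 ∧ k - l ≠ 0 ∧ ((N:ℝ) + 1/2)⁻¹ * sN l ≤ 1 ∧
              ((N:ℝ) + 1/2)⁻¹ * sN (k - l) ≤ 1
          then (nsq l + nsq (k - l))⁻¹ else 0)
      Filter.atTop
      (nhds ((1/2) *
        ∫ x in (Set.univ.pi fun _ : Fin d => Set.Icc (-1:ℝ) 1), (∑ i, (x i)^2)⁻¹)) ∧
    0 < (1/2) *
        ∫ x in (Set.univ.pi fun _ : Fin d => Set.Icc (-1:ℝ) 1), (∑ i, (x i)^2)⁻¹ :=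
  (stmt15_general d hd k).imp_left fun h =>
    h.comp (Filter.tendsto_atTop_add_const_right _ _ tendsto_natCast_atTop_atTop)

end SBE
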